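/- Let S be a measurable space, let κ be a Markov kernel from S to S, let s₀ ∈ S be a point whose singleton {s₀} is measurable, and let q ∈ (0,1] be such that κ(x, {s₀}) ≥ q for every x ∈ S. Then there exists a probability measure μ on S that is invariant for κ, i.e. μ.bind κ = μ. -/

import Mathlib

open MeasureTheory ProbabilityTheory

/-!
If every `κ x` dominates a nonzero measure `ν`, split `κ x = ν + ρ x`. A step of the chain is then
a regeneration from `ν` or a step of the residual kernel `ρ`, which has the constant mass
`1 - ν(S) < 1`. The total `μ = ν + νρ + νρ² + ⋯` of the paths issued by a regeneration has mass
`ν(S) ∑ (1 - ν(S))ⁿ = 1`, whence `μκ = μ(S) ν + μρ = ν + μρ = μ`. A lower bound on the mass of `s₀`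
is the case where `ν` is a multiple of the Dirac measure at `s₀`.
-/

section Minorization

open Set
open scoped ENNReal

variable {α β : Type*} [MeasurableSpace α] [MeasurableSpace β]

lemma smul_dirac_le_of_le_apply_singleton {c : ℝ≥0∞} {a : α} {μ : Measure α} (h : c ≤ μ {a}) :
    c • Measure.dirac a ≤ μ := by
  refine Measure.le_iff.2 fun s hs ↦ ?_
  rw [Measure.smul_apply, Measure.dirac_apply' a hs, smul_eq_mul]
  by_cases ha : a ∈ s
  · simpa [ha] using h.trans (measure_mono (singleton_subset_iff.2 ha))
  · simp [ha]

lemma exists_kernel_eq_add_of_le {κ η : Kernel α β} [IsFiniteKernel η] (h : η ≤ κ) :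
    ∃ ρ : Kernel α β, κ = η + ρ := by
  refine ⟨⟨fun a ↦ κ a - η a, Measure.measurable_of_measurable_coe _ fun s hs ↦ ?_⟩, ?_⟩
  · simp only [Measure.sub_apply hs (h _)]
    exact (κ.measurable_coe hs).sub (η.measurable_coe hs)
  · ext1 a
    rw [add_apply, add_comm]
    exact (Measure.sub_add_cancel_of_le (h a)).symm

/-- The potential `∑ₙ νρⁿ` of the kernel `ρ` with initial measure `ν`: the expected occupation
measure of a chain started from `ν` with transitions `ρ`. -/
noncomputable def potentialMeasure (ρ : Kernel α α) (ν : Measure α) : Measure α :=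
  Measure.sum fun n ↦ (Measure.bind · ρ)^[n] ν

variable (ρ : Kernel α α) (ν : Measure α)

lemma potentialMeasure_eq_add_bind :
    potentialMeasure ρ ν = ν + (potentialMeasure ρ ν).bind ρ := by
  ext s hs
  simp only [potentialMeasure, Measure.bind_sum _ _ ρ.aemeasurable, Measure.add_apply,
    Measure.sum_apply _ hs]
  rw [tsum_eq_zero_add' ENNReal.summable]
  simp only [Function.iterate_zero_apply, Function.iterate_succ_apply']

variable {ρ} {r : ℝ≥0∞}

lemma iterate_bind_apply_univ (hr : ∀ a, ρ a univ = r) (n : ℕ) :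
    (Measure.bind · ρ)^[n] ν univ = ν univ * r ^ n := by
  induction n with
  | zero => simp
  | succ n ih =>
    rw [Function.iterate_succ_apply', Measure.bind_apply MeasurableSet.univ ρ.aemeasurable]
    simp only [hr, lintegral_const, ih]
    ring

lemma potentialMeasure_apply_univ (hr : ∀ a, ρ a univ = r) :
    potentialMeasure ρ ν univ = ν univ * (1 - r)⁻¹ := by
  simp only [potentialMeasure, Measure.sum_apply _ MeasurableSet.univ,
    iterate_bind_apply_univ ν hr, ENNReal.tsum_mul_left, ENNReal.tsum_geometric]

variable {ν}

lemma isProbabilityMeasure_potentialMeasure [IsFiniteMeasure ν] (hν : ν ≠ 0)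
    [IsMarkovKernel (Kernel.const α ν + ρ)] : IsProbabilityMeasure (potentialMeasure ρ ν) := by
  have hsum (a : α) : ν univ + ρ a univ = 1 := by
    simpa using measure_univ (μ := (Kernel.const α ν + ρ) a)
  have hρ (a : α) : ρ a univ = 1 - ν univ :=
    ENNReal.eq_sub_of_add_eq' ENNReal.one_ne_top (by rw [add_comm, hsum])
  have hν_le : ν univ ≤ 1 := by
    obtain ⟨a⟩ : Nonempty α := not_isEmpty_iff.1 fun _ ↦ hν ν.eq_zero_of_isEmpty
    exact le_self_add.trans_eq (hsum a)
  constructor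
  rw [potentialMeasure_apply_univ ν hρ, ENNReal.sub_sub_cancel ENNReal.one_ne_top hν_le]
  exact ENNReal.mul_inv_cancel (Measure.measure_univ_ne_zero.2 hν) (measure_ne_top ν univ)

lemma invariant_potentialMeasure [IsProbabilityMeasure (potentialMeasure ρ ν)] :
    (Kernel.const α ν + ρ).Invariant (potentialMeasure ρ ν) := by
  have hconst : (potentialMeasure ρ ν).bind (Kernel.const α ν) = ν := by
    rw [Measure.const_comp, measure_univ, one_smul]
  rw [Kernel.Invariant, Measure.add_comp, hconst, ← potentialMeasure_eq_add_bind]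

end Minorization

theorem stmt_10_general {S : Type*} [MeasurableSpace S] (κ : Kernel S S) [IsMarkovKernel κ]
    {ν : Measure S} (hν : ν ≠ 0) (hmin : ∀ x : S, ν ≤ κ x) :
    ∃ μ : Measure S, IsProbabilityMeasure μ ∧ μ.bind κ = μ := by
  obtain ⟨x⟩ : Nonempty S := not_isEmpty_iff.1 fun _ ↦ hν ν.eq_zero_of_isEmpty
  have : IsFiniteMeasure ν := isFiniteMeasure_of_le (κ x) (hmin x)
  obtain ⟨ρ, rfl⟩ := exists_kernel_eq_add_of_le (η := Kernel.const S ν) hmin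
  have := isProbabilityMeasure_potentialMeasure (ρ := ρ) hν
  exact ⟨potentialMeasure ρ ν, this, invariant_potentialMeasure.def⟩

/-- Existence of an invariant probability measure for a Markov kernel
satisfying a Doeblin-type minorization `κ(x, {s₀}) ≥ q > 0` at a single state. -/
theorem stmt_10 {S : Type*} [MeasurableSpace S] (κ : Kernel S S) [IsMarkovKernel κ]
    (s₀ : S) (hs₀ : MeasurableSet ({s₀} : Set S))
    (q : ℝ) (hq0 : 0 < q) (hq1 : q ≤ 1)
    (hmin : ∀ x : S, ENNReal.ofReal q ≤ κ x {s₀}) :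
    ∃ μ : Measure S, IsProbabilityMeasure μ ∧ μ.bind κ = μ :=
  stmt_10_general κ (ν := ENNReal.ofReal q • Measure.dirac s₀)
    (by simpa [Measure.dirac_ne_zero] using hq0)
    fun x ↦ smul_dirac_le_of_le_apply_singleton (hmin x)
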